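/- arXiv:2112.06762 — 4 statements merged into one kernel-verified Lean document; each statement's English description precedes it below -/
import Mathlib

section
/- If f : [0,1]^n → [0,1] is a McNaughton function and the set { x̄ ∈ [0,1]^n : f(x̄) = 1 } is nonempty, then it contains a point all of whose coordinates are rational. -/
/-- The unit cube `[0,1]^n`. -/
def Box (n : ℕ) : Set (Fin n → ℝ) := {x | ∀ i, x i ∈ Set.Icc (0 : ℝ) 1}

/-- An `n`-variable McNaughton function: a continuous function from `[0,1]^n` to `[0,1]`
such that there are finitely many affine polynomials with integer coefficients,
one of which agrees with `f` at each point of the cube. -/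
def IsMcNaughton {n : ℕ} (f : (Fin n → ℝ) → ℝ) : Prop :=
  ContinuousOn f (Box n) ∧ (∀ x ∈ Box n, f x ∈ Set.Icc (0 : ℝ) 1) ∧
  ∃ P : Finset ((Fin n → ℤ) × ℤ), ∀ x ∈ Box n,
    ∃ c ∈ P, f x = (∑ j, (c.1 j : ℝ) * x j) + (c.2 : ℝ)

/-!
The real numbers admit `ℚ`-linear maps `φ : ℝ → ℚ` fixing `ℚ` and pointwise arbitrarily close to the
identity: choose them freely on a basis of a complement of `ℚ`. Applied coordinatewise to `x`, such
a `φ` gives a rational point `y` near `x` that satisfies every affine equation with rational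
coefficients satisfied by `x`. Near `x`, the constraints of a rational polyhedron that are tight at
`x` then stay tight at `y`, and the others stay strict. If `f x = q` is rational, then near `x` the
function `f` can agree at `y` only with affine pieces taking the value `q` at `x`, by continuity,
and these take the value `q` at `y` too.
-/

open Filter Set Topology

section LinearApproximation

variable {K V E : Type*} [DivisionRing K] [AddCommGroup V] [Module K V] [AddCommGroup E]
  [Module K E] [TopologicalSpace E] [ContinuousAdd E] [ContinuousConstSMul K E]
  {D : Submodule K E}

theorem coe_linearMap_mem_closure_of_dense (hD : Dense (D : Set E)) (T : V →ₗ[K] E) :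
    ⇑T ∈ closure {g : V → E | ∃ φ : V →ₗ[K] E, (∀ v, φ v ∈ D) ∧ ⇑φ = g} := by
  let b := Module.Basis.ofVectorSpace K V
  let extend : (_ → E) → V → E := fun d => b.constr ℕ d
  have extend_continuous : Continuous extend := by
    refine continuous_pi fun v => ?_
    simp only [extend, Module.Basis.constr_apply, Finsupp.sum]
    fun_prop
  have extend_basis : extend (T ∘ b) = T := congrArg DFunLike.coe (b.constr_self ℕ T)
  rw [← extend_basis]
  refine map_mem_closure extend_continuous (dense_pi univ (fun _ _ => hD) _) fun d hd => ?_
  refine ⟨b.constr ℕ d, fun v => ?_, rfl⟩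
  rw [Module.Basis.constr_apply]
  exact D.sum_mem fun i _ => D.smul_mem _ (hd i (mem_univ i))

theorem id_mem_closure_isProj_of_dense (hD : Dense (D : Set E)) :
    id ∈ closure {g : E → E | ∃ φ : E →ₗ[K] E, LinearMap.IsProj D φ ∧ ⇑φ = g} := by
  obtain ⟨C, hDC⟩ := D.exists_isCompl
  let extend : (C → E) → E → E :=
    fun g x => D.projectionOnto C hDC x + g (C.projectionOnto D hDC.symm x)
  have extend_linear (ψ : C →ₗ[K] E) : extend ψ = LinearMap.ofIsCompl hDC D.subtype ψ := by
    ext x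
    simp [extend, LinearMap.ofIsCompl_eq_add]
  have extend_subtype : extend C.subtype = id := by
    rw [extend_linear, LinearMap.ofIsCompl_eq hDC (χ := LinearMap.id) (fun _ => rfl) fun _ => rfl]
    rfl
  rw [← extend_subtype]
  refine map_mem_closure (by fun_prop) (coe_linearMap_mem_closure_of_dense hD C.subtype) ?_
  rintro _ ⟨ψ, hψ, rfl⟩
  refine ⟨LinearMap.ofIsCompl hDC D.subtype ψ, ⟨fun x => ?_, fun x hx => ?_⟩,
    (extend_linear ψ).symm⟩
  · rw [← extend_linear]
    exact D.add_mem (SetLike.coe_mem _) (hψ _)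
  · exact LinearMap.ofIsCompl_apply_left hDC ⟨x, hx⟩

end LinearApproximation

variable {ι : Type*} [Fintype ι] {f g : (ι → ℝ) → ℝ} {S : Set (ι → ℝ)} {x : ι → ℝ}

/-- An affine function on `ℝ^ι` with rational coefficients and rational constant term. -/
def IsRationalAffine (g : (ι → ℝ) → ℝ) : Prop :=
  ∃ (a : ι → ℚ) (b : ℚ), ∀ x, g x = ∑ i, (a i : ℝ) * x i + b

/-- A rational polyhedron: the solution set of finitely many inequalities `0 ≤ g x`, each `g` being
affine with rational coefficients. It need not be bounded. -/
def IsRationalPolyhedron (S : Set (ι → ℝ)) : Prop :=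
  ∃ G : Set ((ι → ℝ) → ℝ), G.Finite ∧ (∀ g ∈ G, IsRationalAffine g) ∧ S = {x | ∀ g ∈ G, 0 ≤ g x}

/-- A continuous function on `S` that agrees at each point of `S` with one of finitely many affine
functions with rational coefficients. As for McNaughton functions, the regions on which the
individual pieces are used are not part of the data. -/
def IsRationalPiecewiseAffineOn (f : (ι → ℝ) → ℝ) (S : Set (ι → ℝ)) : Prop :=
  ContinuousOn f S ∧
    ∃ P : Set ((ι → ℝ) → ℝ), P.Finite ∧ (∀ g ∈ P, IsRationalAffine g) ∧ ∀ x ∈ S, ∃ g ∈ P, f x = g x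

/-- The rational points of the smallest rational affine subspace containing `x`: those satisfying
every affine equation with rational coefficients that `x` satisfies. -/
def rationalSpecializations (x : ι → ℝ) : Set (ι → ℝ) :=
  {y | (∀ i, ∃ r : ℚ, y i = r) ∧ ∀ g, IsRationalAffine g → g x = 0 → g y = 0}

namespace IsRationalAffine

theorem coord (i : ι) : IsRationalAffine fun x : ι → ℝ => x i := by
  classical
  exact ⟨Pi.single i 1, 0, fun x => by simp [Pi.single_apply, apply_ite (Rat.cast : ℚ → ℝ)]⟩

theorem const_sub (q : ℚ) (hg : IsRationalAffine g) : IsRationalAffine fun x => q - g x := by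
  obtain ⟨a, b, hg⟩ := hg
  refine ⟨-a, q - b, fun x => ?_⟩
  simp only [hg, Pi.neg_apply, Rat.cast_neg, neg_mul, Finset.sum_neg_distrib, Rat.cast_sub]
  ring

theorem continuous (hg : IsRationalAffine g) : Continuous g := by
  obtain ⟨a, b, hg⟩ := hg
  rw [funext hg]
  fun_prop

theorem apply_linearMap_comp (hg : IsRationalAffine g) {φ : ℝ →ₗ[ℚ] ℝ} (hφ : φ 1 = 1)
    (x : ι → ℝ) : g (φ ∘ x) = φ (g x) := by
  obtain ⟨a, b, hg⟩ := hg
  have map_const : φ b = b := by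
    simpa [hφ, Rat.smul_def] using φ.map_smul b 1
  simp [hg, map_const, ← Rat.smul_def]

theorem eq_of_mem_rationalSpecializations (hg : IsRationalAffine g) {y : ι → ℝ}
    (hy : y ∈ rationalSpecializations x) {q : ℚ} (hq : g x = q) : g y = q :=
  (sub_eq_zero.1 (hy.2 _ (hg.const_sub q) (sub_eq_zero.2 hq.symm))).symm

end IsRationalAffine

theorem mem_closure_rationalSpecializations (x : ι → ℝ) :
    x ∈ closure (rationalSpecializations x) := by
  have rat_dense : Dense ((1 : Submodule ℚ ℝ) : Set ℝ) := by
    rw [Submodule.one_eq_range, LinearMap.coe_range]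
    exact Rat.denseRange_cast
  refine map_mem_closure (f := fun g : ℝ → ℝ => g ∘ x) (by fun_prop)
    (id_mem_closure_isProj_of_dense rat_dense) ?_
  rintro _ ⟨φ, hφ, rfl⟩
  refine ⟨fun i => ?_, fun g hg hgx => ?_⟩
  · obtain ⟨r, hr⟩ := Submodule.mem_one.1 (hφ.map_mem (x i))
    exact ⟨r, hr.symm⟩
  · rw [hg.apply_linearMap_comp (hφ.map_id 1 (Submodule.mem_one.2 ⟨1, map_one _⟩)), hgx, map_zero]

theorem IsRationalPolyhedron.eventually_mem (hS : IsRationalPolyhedron S) (hx : x ∈ S) :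
    ∀ᶠ y in 𝓝[rationalSpecializations x] x, y ∈ S := by
  obtain ⟨G, hG, hGaff, rfl⟩ := hS
  refine (eventually_all_finite hG).2 fun g hg => ?_
  rcases (hx g hg).eq_or_lt with tight | strict
  · filter_upwards [self_mem_nhdsWithin] with y hy
    exact (hy.2 g (hGaff g hg) tight.symm).ge
  · filter_upwards [((hGaff g hg).continuous.continuousWithinAt).eventually (lt_mem_nhds strict)]
      with y hy using hy.le

theorem IsRationalPiecewiseAffineOn.eventually_eq (hf : IsRationalPiecewiseAffineOn f S)
    (hS : IsRationalPolyhedron S) (hx : x ∈ S) {q : ℚ} (hq : f x = q) :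
    ∀ᶠ y in 𝓝[rationalSpecializations x] x, f y = q := by
  obtain ⟨hcont, P, hP, hPaff, hfP⟩ := hf
  have f_tendsto : Tendsto f (𝓝[rationalSpecializations x] x) (𝓝 (f x)) :=
    (hcont x hx).mono_left (nhdsWithin_le_iff.2 (hS.eventually_mem hx))
  have piece_eq : ∀ᶠ y in 𝓝[rationalSpecializations x] x, ∀ g ∈ P, f y = g y → f y = q := by
    refine (eventually_all_finite hP).2 fun g hg => ?_
    by_cases hgx : g x = q
    · filter_upwards [self_mem_nhdsWithin] with y hy hfg
      rw [hfg, (hPaff g hg).eq_of_mem_rationalSpecializations hy hgx]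
    · have g_tendsto : Tendsto g (𝓝[rationalSpecializations x] x) (𝓝 (g x)) :=
        (hPaff g hg).continuous.continuousWithinAt
      have diff_ne_zero : f x - g x ≠ 0 := sub_ne_zero.2 fun h => hgx (h ▸ hq)
      filter_upwards [(f_tendsto.sub g_tendsto).eventually_ne diff_ne_zero] with y hy h
      exact absurd (sub_eq_zero.2 h) hy
  filter_upwards [hS.eventually_mem hx, piece_eq] with y hyS hy
  obtain ⟨g, hg, hfg⟩ := hfP y hyS
  exact hy g hg hfg

theorem isRationalPolyhedron_box (n : ℕ) : IsRationalPolyhedron (Box n) := by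
  refine ⟨range (fun i x => x i) ∪ range (fun i x => 1 - x i),
    (finite_range _).union (finite_range _), ?_, ?_⟩
  · rintro _ (⟨i, rfl⟩ | ⟨i, rfl⟩)
    · exact .coord i
    · simpa using (IsRationalAffine.coord i).const_sub 1
  · ext x
    simp [Box, or_imp, forall_and]

theorem IsMcNaughton.isRationalPiecewiseAffineOn {n : ℕ} {f : (Fin n → ℝ) → ℝ}
    (hf : IsMcNaughton f) : IsRationalPiecewiseAffineOn f (Box n) := by
  obtain ⟨hcont, -, P, hP⟩ := hf
  refine ⟨hcont, (fun c x => ∑ j, (c.1 j : ℝ) * x j + c.2) '' (P : Set ((Fin n → ℤ) × ℤ)),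
    P.finite_toSet.image _, ?_, fun x hx => ?_⟩
  · rintro _ ⟨c, -, rfl⟩
    exact ⟨fun j => c.1 j, c.2, fun x => by simp⟩
  · obtain ⟨c, hc, hfc⟩ := hP x hx
    exact ⟨_, mem_image_of_mem _ hc, hfc⟩

theorem mcnaughton_one_set_has_rational_point_general (hf : IsRationalPiecewiseAffineOn f S)
    (hS : IsRationalPolyhedron S) (hx : x ∈ S) {q : ℚ} (hq : f x = q) :
    x ∈ closure {y ∈ S | f y = q ∧ ∀ i, ∃ r : ℚ, y i = r} := by
  have := mem_closure_iff_nhdsWithin_neBot.1 (mem_closure_rationalSpecializations x)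
  refine mem_closure_of_tendsto (b := 𝓝[rationalSpecializations x] x) nhdsWithin_le_nhds ?_
  filter_upwards [hS.eventually_mem hx, hf.eventually_eq hS hx hq, self_mem_nhdsWithin]
    with y hyS hyq hy using ⟨hyS, hyq, hy.1⟩

/-- if `f` is a McNaughton function and `{ x̄ ∈ [0,1]^n : f(x̄) = 1 }` is
nonempty, then it contains a point all of whose coordinates are rational. -/
theorem mcnaughton_one_set_has_rational_point {n : ℕ} (f : (Fin n → ℝ) → ℝ)
    (hf : IsMcNaughton f) (hne : ∃ x ∈ Box n, f x = 1) :
    ∃ x ∈ Box n, f x = 1 ∧ ∀ i, ∃ r : ℚ, x i = (r : ℝ) := by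
  obtain ⟨x, hx, hfx⟩ := hne
  simpa only [Rat.cast_one, Set.Nonempty, mem_ofPred_eq] using closure_nonempty_iff.1 ⟨x,
    mcnaughton_one_set_has_rational_point_general hf.isRationalPiecewiseAffineOn
      (isRationalPolyhedron_box n) hx (q := 1) (by rw [hfx, Rat.cast_one])⟩
end

section
/- No irrational number is implicitly definable in the standard MV-algebra: if f : [0,1]^n → [0,1] is a McNaughton function, the set { x̄ : f(x̄) = 1 } is nonempty, and there is a real a ∈ [0,1] such that every x̄ with f(x̄) = 1 satisfies x_i = a, then a is rational. -/
open Filter Topology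

theorem exists_ratLinear_of_irrational {a : ℝ} (ha : Irrational a) :
    ∃ d : ℝ →ₗ[ℚ] ℝ, d 1 = 0 ∧ d a = 1 := by
  have ha_span : a ∉ Submodule.span ℚ ({1} : Set ℝ) := fun h ↦ by
    obtain ⟨r, hr⟩ := Submodule.mem_span_singleton.1 h
    exact ha ⟨r, by rw [← hr, Rat.smul_def, mul_one]⟩
  obtain ⟨d, hd, hda⟩ := LinearMap.exists_extend_of_notMem
    (0 : Submodule.span ℚ ({1} : Set ℝ) →ₗ[ℚ] ℝ) ha_span 1
  exact ⟨d, LinearMap.congr_fun hd ⟨1, Submodule.mem_span_singleton_self 1⟩, hda⟩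

theorem map_ratCast_eq_zero {F M : Type*} [DivisionRing F] [CharZero F] [AddCommGroup M]
    [Module ℚ M] {d : F →ₗ[ℚ] M} (hd : d 1 = 0) (q : ℚ) : d q = 0 := by
  simpa [hd, Rat.smul_def] using map_smul d q 1

section RationalGeometry

variable {ι : Type*}

/-- The line through `x` whose direction is the coordinatewise image of `x` under `d`; it serves to
perturb `x` without affecting the rational values of rational affine functions. -/
noncomputable def ratLinearShift (d : ℝ →ₗ[ℚ] ℝ) (x : ι → ℝ) (t : ℝ) : ι → ℝ :=
  fun j ↦ x j + t * d (x j)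

theorem tendsto_ratLinearShift (d : ℝ →ₗ[ℚ] ℝ) (x : ι → ℝ) :
    Tendsto (ratLinearShift d x) (𝓝 0) (𝓝 x) := by
  have hcont : Continuous (ratLinearShift d x) := by unfold ratLinearShift; fun_prop
  have hzero : ratLinearShift d x 0 = x := by funext j; simp [ratLinearShift]
  simpa only [hzero] using hcont.tendsto 0

variable [Fintype ι]

/-- Affine functions on `ℝ^ι` with rational coefficients. -/
def IsRatAffine (g : (ι → ℝ) → ℝ) : Prop :=
  ∃ (c : ι → ℚ) (b : ℚ), ∀ x, g x = ∑ j, (c j : ℝ) * x j + b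

/-- Rational polyhedra: finite intersections of closed half-spaces `{x | 0 ≤ h x}` bounded by
rational affine functions `h`. -/
def IsRatPolyhedron (K : Set (ι → ℝ)) : Prop :=
  ∃ H : Set ((ι → ℝ) → ℝ), H.Finite ∧ (∀ h ∈ H, IsRatAffine h) ∧ K = {x | ∀ h ∈ H, 0 ≤ h x}

/-- Functions that agree at each point of `K` with a member of a fixed finite set of rational affine
functions. Continuity is not included. -/
def IsPiecewiseRatAffineOn (f : (ι → ℝ) → ℝ) (K : Set (ι → ℝ)) : Prop :=
  ∃ G : Set ((ι → ℝ) → ℝ), G.Finite ∧ (∀ g ∈ G, IsRatAffine g) ∧ ∀ x ∈ K, ∃ g ∈ G, f x = g x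

namespace IsRatAffine

variable {g : (ι → ℝ) → ℝ} {d : ℝ →ₗ[ℚ] ℝ}

theorem coord (i : ι) : IsRatAffine fun x : ι → ℝ ↦ x i := by
  classical
  exact ⟨Pi.single i 1, 0, fun x ↦ by simp [Pi.single_apply, apply_ite, ite_mul]⟩

theorem one_sub (hg : IsRatAffine g) : IsRatAffine fun x ↦ 1 - g x := by
  obtain ⟨c, b, hcb⟩ := hg
  refine ⟨-c, 1 - b, fun x ↦ ?_⟩
  simp only [hcb, Pi.neg_apply, Rat.cast_neg, neg_mul, Finset.sum_neg_distrib, Rat.cast_sub,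
    Rat.cast_one]
  ring

theorem continuous (hg : IsRatAffine g) : Continuous g := by
  obtain ⟨c, b, hcb⟩ := hg
  rw [funext hcb]
  fun_prop

theorem apply_ratLinearShift (hg : IsRatAffine g) (hd : d 1 = 0) (x : ι → ℝ) (t : ℝ) :
    g (ratLinearShift d x t) = g x + t * d (g x) := by
  obtain ⟨c, b, hcb⟩ := hg
  have hd_mul (r : ℚ) (y : ℝ) : d (r * y) = r * d y := by
    rw [← Rat.smul_def, map_smul, Rat.smul_def]
  have hd_apply : d (g x) = ∑ j, (c j : ℝ) * d (x j) := by
    simp only [hcb, map_add, map_sum, hd_mul, map_ratCast_eq_zero hd, add_zero]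
  rw [hd_apply, hcb, hcb, Finset.mul_sum, add_right_comm, ← Finset.sum_add_distrib]
  congr 1
  exact Finset.sum_congr rfl fun j _ ↦ by rw [ratLinearShift]; ring

theorem apply_ratLinearShift_of_eq_ratCast (hg : IsRatAffine g) (hd : d 1 = 0) {x : ι → ℝ} {q : ℚ}
    (hx : g x = q) (t : ℝ) : g (ratLinearShift d x t) = q := by
  rw [hg.apply_ratLinearShift hd, hx, map_ratCast_eq_zero hd, mul_zero, add_zero]

theorem eventually_nonneg_ratLinearShift (hg : IsRatAffine g) (hd : d 1 = 0) {x : ι → ℝ}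
    (hx : 0 ≤ g x) : ∀ᶠ t in 𝓝 0, 0 ≤ g (ratLinearShift d x t) := by
  rcases hx.eq_or_lt with hzero | hpos
  · refine .of_forall fun t ↦ ?_
    simp [hg.apply_ratLinearShift hd, ← hzero]
  · exact ((hg.continuous.tendsto x).comp (tendsto_ratLinearShift d x)).eventually_const_le hpos

end IsRatAffine

variable {K : Set (ι → ℝ)} {f : (ι → ℝ) → ℝ} {d : ℝ →ₗ[ℚ] ℝ} {x : ι → ℝ}

theorem IsRatPolyhedron.eventually_ratLinearShift_mem (hK : IsRatPolyhedron K) (hd : d 1 = 0)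
    (hx : x ∈ K) : ∀ᶠ t in 𝓝 0, ratLinearShift d x t ∈ K := by
  obtain ⟨H, hH, hHaff, rfl⟩ := hK
  exact (eventually_all_finite hH).2 fun h hh ↦
    (hHaff h hh).eventually_nonneg_ratLinearShift hd (hx h hh)

theorem IsPiecewiseRatAffineOn.eventually_exists_piece (hf : IsPiecewiseRatAffineOn f K)
    (hcont : ContinuousWithinAt f K x) :
    ∀ᶠ y in 𝓝[K] x, ∃ g, IsRatAffine g ∧ g x = f x ∧ f y = g y := by
  obtain ⟨G, hG, hGaff, hfG⟩ := hf
  have hagree : ∀ᶠ y in 𝓝[K] x, ∀ g ∈ G, f y = g y → g x = f x := by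
    refine (eventually_all_finite hG).2 fun g hg ↦ ?_
    by_cases hgx : g x = f x
    · exact .of_forall fun _ _ ↦ hgx
    · have hne : ∀ᶠ y in 𝓝[K] x, f y ≠ g y :=
        ((hcont.sub (hGaff g hg).continuous.continuousWithinAt).tendsto.eventually_ne
          (sub_ne_zero.2 (Ne.symm hgx))).mono fun _ ↦ sub_ne_zero.1
      exact hne.mono fun y hy hfy ↦ absurd hfy hy
  filter_upwards [hagree, self_mem_nhdsWithin] with y hy hyK
  obtain ⟨g, hg, hfg⟩ := hfG y hyK
  exact ⟨g, hGaff g hg, hy g hg hfg, hfg⟩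

theorem IsPiecewiseRatAffineOn.tendsto_ratLinearShift_levelSet (hf : IsPiecewiseRatAffineOn f K)
    (hK : IsRatPolyhedron K) (hd : d 1 = 0) (hx : x ∈ K) (hcont : ContinuousWithinAt f K x)
    {q : ℚ} (hfx : f x = q) :
    Tendsto (ratLinearShift d x) (𝓝 0) (𝓝[{y ∈ K | f y = q}] x) := by
  have hmem := hK.eventually_ratLinearShift_mem hd hx
  have htendsto : Tendsto (ratLinearShift d x) (𝓝 0) (𝓝[K] x) :=
    tendsto_nhdsWithin_iff.2 ⟨tendsto_ratLinearShift d x, hmem⟩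
  refine tendsto_nhdsWithin_iff.2 ⟨tendsto_ratLinearShift d x, ?_⟩
  filter_upwards [hmem, htendsto.eventually (hf.eventually_exists_piece hcont)] with t htK hpiece
  obtain ⟨g, hg, hgx, hfg⟩ := hpiece
  exact ⟨htK, hfg.trans (hg.apply_ratLinearShift_of_eq_ratCast hd (hgx.trans hfx) t)⟩

theorem implicitly_definable_implies_rational_general (hK : IsRatPolyhedron K)
    (hf : IsPiecewiseRatAffineOn f K) (hx : x ∈ K) (hcont : ContinuousWithinAt f K x)
    {q : ℚ} (hfx : f x = q) {g : (ι → ℝ) → ℝ} (hg : IsRatAffine g)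
    (hconst : ∀ᶠ y in 𝓝[{y ∈ K | f y = q}] x, g y = g x) :
    ∃ r : ℚ, g x = r := by
  by_contra hirr
  obtain ⟨d, hd, hdg⟩ := exists_ratLinear_of_irrational (a := g x)
    fun ⟨r, hr⟩ ↦ hirr ⟨r, hr.symm⟩
  have hshift : ∀ᶠ t in 𝓝 0, g (ratLinearShift d x t) = g x :=
    (hf.tendsto_ratLinearShift_levelSet hK hd hx hcont hfx).eventually hconst
  obtain ⟨t, ht, ht0⟩ :=
    ((hshift.filter_mono nhdsWithin_le_nhds).and (self_mem_nhdsWithin (s := {0}ᶜ))).exists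
  rw [hg.apply_ratLinearShift hd, hdg, mul_one, add_eq_left] at ht
  exact ht0 ht

end RationalGeometry

theorem isRatPolyhedron_box (n : ℕ) : IsRatPolyhedron (Box n) := by
  refine ⟨Set.range (fun i x ↦ x i) ∪ Set.range (fun i x ↦ 1 - x i), Set.toFinite _, ?_, ?_⟩
  · rintro _ (⟨i, rfl⟩ | ⟨i, rfl⟩)
    exacts [.coord i, (IsRatAffine.coord i).one_sub]
  · ext x
    simp [Box, Set.mem_Icc, or_imp, forall_and]

theorem IsMcNaughton.isPiecewiseRatAffineOn {n : ℕ} {f : (Fin n → ℝ) → ℝ} (hf : IsMcNaughton f) :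
    IsPiecewiseRatAffineOn f (Box n) := by
  obtain ⟨-, -, P, hP⟩ := hf
  refine ⟨(fun (c : (Fin n → ℤ) × ℤ) x ↦ ∑ j, (c.1 j : ℝ) * x j + (c.2 : ℝ)) '' P,
    P.finite_toSet.image _, ?_, ?_⟩
  · rintro _ ⟨c, -, rfl⟩
    exact ⟨fun j ↦ c.1 j, c.2, fun x ↦ by simp only [Rat.cast_intCast]⟩
  · intro x hx
    obtain ⟨c, hc, hfc⟩ := hP x hx
    exact ⟨_, ⟨c, hc, rfl⟩, hfc⟩

/-- no irrational number is implicitly definable in the standard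
MV-algebra: if `f` is a McNaughton function, `{ x̄ : f(x̄) = 1 }` is nonempty, and
`a ∈ [0,1]` is such that every `x̄` with `f(x̄) = 1` satisfies `x_i = a`, then `a` is
rational. -/
theorem implicitly_definable_implies_rational {n : ℕ} (f : (Fin n → ℝ) → ℝ)
    (hf : IsMcNaughton f) (hne : ∃ x ∈ Box n, f x = 1) (i : Fin n)
    (a : ℝ) (ha : a ∈ Set.Icc (0 : ℝ) 1)
    (hdef : ∀ x ∈ Box n, f x = 1 → x i = a) :
    ∃ r : ℚ, a = (r : ℝ) := by
  obtain ⟨x, hx, hfx⟩ := hne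
  have hconst : ∀ᶠ y in 𝓝[{y ∈ Box n | f y = (1 : ℚ)}] x, y i = x i :=
    eventually_mem_nhdsWithin.mono fun y ⟨hy, hfy⟩ ↦
      (hdef y hy (hfy.trans Rat.cast_one)).trans (hdef x hx hfx).symm
  rw [← hdef x hx hfx]
  exact implicitly_definable_implies_rational_general (isRatPolyhedron_box n)
    hf.isPiecewiseRatAffineOn hx (hf.1 x hx) (hfx.trans Rat.cast_one.symm) (.coord i) hconst
end

section
/- The only expansion of the standard MV-algebra with rational constants satisfying the bookkeeping axioms is the canonical one: if c : ℚ∩[0,1] → [0,1] is a function satisfying c(1) = 1, c(0) = 0, c(1−q) = 1 − c(q), and c(min(1, 1−q+r)) = min(1, 1 − c(q) + c(r)) for all rationals q, r ∈ [0,1], then c(q) = q for every rational q ∈ [0,1]. -/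
/-! Since `q → r = 1` exactly when `q ≤ r`, preserving Łukasiewicz implication forces `c` to be
monotone. Monotonicity removes the truncation from `c ((a + b) → b)`, which makes `c` additive
wherever the sum stays in `[0,1]`. From `c 1 = 1` one then gets `c (1 / n) = 1 / n`, and summing
copies of `1 / n` reaches every rational of the interval. -/

open Set

section PartialAdditivity

theorem map_nsmul_of_map_add_of_le {M N : Type*} [AddMonoid M] [Preorder M] [AddLeftMono M]
    [AddMonoid N] [IsLeftCancelAdd N] {f : M → N} {u x : M}
    (hadd : ∀ a b, 0 ≤ a → 0 ≤ b → a + b ≤ u → f (a + b) = f a + f b) (hx : 0 ≤ x) :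
    ∀ k : ℕ, k • x ≤ u → f (k • x) = k • f x
  | 0, hk => by
    have hzero : f 0 + f 0 = f 0 := by
      simpa only [add_zero] using (hadd 0 0 le_rfl le_rfl (by simpa using hk)).symm
    simpa only [zero_nsmul] using add_eq_left.mp hzero
  | k + 1, hk => by
    rw [succ_nsmul] at hk
    have hk' : k • x ≤ u := (le_add_of_nonneg_right hx).trans hk
    rw [succ_nsmul, hadd _ _ (nsmul_nonneg hx k) hx hk,
      map_nsmul_of_map_add_of_le hadd hx k hk', succ_nsmul]

variable {K : Type*} [DivisionRing K] {f : ℚ → K}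

theorem map_inv_natCast_of_map_add_of_le_one (h1 : f 1 = 1)
    (hadd : ∀ a b, 0 ≤ a → 0 ≤ b → a + b ≤ 1 → f (a + b) = f a + f b) {n : ℕ} (hn : n ≠ 0) :
    f (n : ℚ)⁻¹ = (n : K)⁻¹ := by
  have hsum : n • (n : ℚ)⁻¹ = 1 := by
    rw [nsmul_eq_mul, mul_inv_cancel₀ (Nat.cast_ne_zero.mpr hn)]
  have hmap := map_nsmul_of_map_add_of_le hadd (by positivity) n hsum.le
  rw [hsum, h1, nsmul_eq_mul] at hmap
  exact eq_inv_of_mul_eq_one_right hmap.symm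

theorem eq_ratCast_of_map_add_of_le_one (h1 : f 1 = 1)
    (hadd : ∀ a b, 0 ≤ a → 0 ≤ b → a + b ≤ 1 → f (a + b) = f a + f b) {q : ℚ}
    (hq : q ∈ Icc 0 1) : f q = q := by
  obtain ⟨hq0, hq1⟩ := hq
  lift q to ℚ≥0 using hq0
  have hq_nsmul : (q : ℚ) = q.num • (q.den : ℚ)⁻¹ := by
    rw [nsmul_eq_mul, ← div_eq_mul_inv, ← NNRat.cast_def]
  have hmap := map_nsmul_of_map_add_of_le hadd (by positivity) q.num (hq_nsmul ▸ hq1)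
  calc
    f q = q.num • f (q.den : ℚ)⁻¹ := by rw [← hmap, ← hq_nsmul]
    _ = q.num • (q.den : K)⁻¹ := by rw [map_inv_natCast_of_map_add_of_le_one h1 hadd q.den_ne_zero]
    _ = ((q : ℚ) : K) := by
      rw [nsmul_eq_mul, ← div_eq_mul_inv, Rat.cast_nnratCast, NNRat.cast_def]

end PartialAdditivity

/-- The Łukasiewicz implication `x →_Ł y`, the residuum of the standard MV-algebra. It is defined
on the whole group, but has its logical meaning only for `x` and `y` between `0` and `1`. -/
def lukasiewiczImp {G : Type*} [AddCommGroupWithOne G] [LinearOrder G] (x y : G) : G :=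
  min 1 (1 - x + y)

section LukasiewiczImp

variable {G : Type*} [AddCommGroupWithOne G] [LinearOrder G] [IsOrderedAddMonoid G] {x y : G}

theorem lukasiewiczImp_eq_one_iff : lukasiewiczImp x y = 1 ↔ x ≤ y := by
  rw [lukasiewiczImp, min_eq_left_iff, sub_add, le_sub_self_iff, sub_nonpos]

theorem lukasiewiczImp_of_le (h : y ≤ x) : lukasiewiczImp x y = 1 - x + y := by
  rw [lukasiewiczImp, min_eq_right_iff, sub_add, sub_le_self_iff, sub_nonneg]
  exact h

end LukasiewiczImp

/-- A homomorphism between the MV-algebras carried by the intervals `[0,1]` of `F` and `K`, encoded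
as a function `F → K` whose values outside `[0,1]` are irrelevant. The operations other than `0` and
`→_Ł` are terms in these: `1` is `0 →_Ł 0` and `¬_Ł x` is `x →_Ł 0`. For `F = ℚ` these are the
bookkeeping axioms. -/
structure IsLukasiewiczHom {F K : Type*} [AddCommGroupWithOne F] [LinearOrder F]
    [AddCommGroupWithOne K] [LinearOrder K] (c : F → K) : Prop where
  map_zero : c 0 = 0
  map_imp : ∀ q ∈ Icc (0 : F) 1, ∀ r ∈ Icc (0 : F) 1,
    c (lukasiewiczImp q r) = lukasiewiczImp (c q) (c r)

namespace IsLukasiewiczHom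

variable {F K : Type*} [AddCommGroupWithOne F] [LinearOrder F] [IsOrderedAddMonoid F]
  [ZeroLEOneClass F] [AddCommGroupWithOne K] [LinearOrder K] [IsOrderedAddMonoid K] {c : F → K}

theorem map_one (hc : IsLukasiewiczHom c) : c 1 = 1 := by
  have h := hc.map_imp 0 (left_mem_Icc.mpr zero_le_one) 0 (left_mem_Icc.mpr zero_le_one)
  rwa [lukasiewiczImp_eq_one_iff.mpr le_rfl, lukasiewiczImp_eq_one_iff.mpr le_rfl] at h

theorem monotoneOn (hc : IsLukasiewiczHom c) : MonotoneOn c (Icc 0 1) := by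
  intro r hr q hq hrq
  rw [← lukasiewiczImp_eq_one_iff, ← hc.map_imp r hr q hq, lukasiewiczImp_eq_one_iff.mpr hrq,
    hc.map_one]

theorem map_one_sub (hc : IsLukasiewiczHom c) {q : F} (hq : q ∈ Icc 0 1) :
    c (1 - q) = 1 - c q := by
  have hzero : (0 : F) ∈ Icc 0 1 := left_mem_Icc.mpr zero_le_one
  have hcq : 0 ≤ c q := hc.map_zero ▸ hc.monotoneOn hzero hq hq.1
  have h := hc.map_imp q hq 0 hzero
  rwa [hc.map_zero, lukasiewiczImp_of_le hq.1, lukasiewiczImp_of_le hcq, add_zero, add_zero] at h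

theorem map_add (hc : IsLukasiewiczHom c) {a b : F} (ha : 0 ≤ a) (hb : 0 ≤ b) (hab : a + b ≤ 1) :
    c (a + b) = c a + c b := by
  have ha_mem : a ∈ Icc 0 1 := ⟨ha, (le_add_of_nonneg_right hb).trans hab⟩
  have hb_mem : b ∈ Icc 0 1 := ⟨hb, (le_add_of_nonneg_left ha).trans hab⟩
  have hab_mem : a + b ∈ Icc 0 1 := ⟨add_nonneg ha hb, hab⟩
  have hb_le : b ≤ a + b := le_add_of_nonneg_left ha
  have hsub : 1 - c a = 1 - (c (a + b) - c b) := by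
    calc
      1 - c a = c (1 - a) := (hc.map_one_sub ha_mem).symm
      _ = c (lukasiewiczImp (a + b) b) := by
        rw [lukasiewiczImp_of_le hb_le, sub_add, add_sub_cancel_right]
      _ = lukasiewiczImp (c (a + b)) (c b) := hc.map_imp _ hab_mem _ hb_mem
      _ = 1 - (c (a + b) - c b) := by
        rw [lukasiewiczImp_of_le (hc.monotoneOn hb_mem hab_mem hb_le), sub_add]
  exact (eq_sub_iff_add_eq.mp (sub_right_inj.mp hsub)).symm

end IsLukasiewiczHom

theorem bookkeeping_expansion_is_canonical_general {K : Type*} [DivisionRing K] [LinearOrder K]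
    [IsOrderedAddMonoid K] {c : ℚ → K} (hc : IsLukasiewiczHom c) {q : ℚ} (hq : q ∈ Icc 0 1) :
    c q = q :=
  eq_ratCast_of_map_add_of_le_one hc.map_one (fun _ _ ↦ hc.map_add) hq

/-- the only expansion of the standard MV-algebra with rational constants
satisfying the bookkeeping axioms is the canonical one: if `c : ℚ∩[0,1] → [0,1]`
satisfies `c(1) = 1`, `c(0) = 0`, `c(1−q) = 1−c(q)` and
`c(min(1, 1−q+r)) = min(1, 1−c(q)+c(r))` for all rationals `q, r ∈ [0,1]`, then
`c(q) = q` for every rational `q ∈ [0,1]`. -/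
theorem bookkeeping_expansion_is_canonical (c : ℚ → ℝ)
    (hrange : ∀ q : ℚ, 0 ≤ q → q ≤ 1 → c q ∈ Set.Icc (0 : ℝ) 1)
    (h1 : c 1 = 1) (h0 : c 0 = 0)
    (hneg : ∀ q : ℚ, 0 ≤ q → q ≤ 1 → c (1 - q) = 1 - c q)
    (himp : ∀ q r : ℚ, 0 ≤ q → q ≤ 1 → 0 ≤ r → r ≤ 1 →
      c (min 1 (1 - q + r)) = min 1 (1 - c q + c r)) :
    ∀ q : ℚ, 0 ≤ q → q ≤ 1 → c q = (q : ℝ) := by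
  have hc : IsLukasiewiczHom c :=
    ⟨h0, fun q hq r hr ↦ himp q r hq.1 hq.2 hr.1 hr.2⟩
  exact fun q hq0 hq1 ↦ bookkeeping_expansion_is_canonical_general hc ⟨hq0, hq1⟩
end

section
/- The standard MV-algebra has no nontrivial automorphisms: if h : [0,1] → [0,1] is a bijection of the real unit interval satisfying h(1−x) = 1 − h(x) and h(min(1, x+y)) = min(1, h(x) + h(y)) for all x, y ∈ [0,1], then h is the identity map. -/
/-!
Let `g` and `h` be homomorphisms of MV-algebras from `[0, u]` to `[0, v]`. Being additive wherever
the truncation in `⊕` is inactive, both commute with `x ↦ 2x` on the lower half of `[0, u]`, so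
doubling `x` there doubles `|g x - h x|`. A point of the upper half is first moved to the lower half
by the negation `x ↦ u - x`, which does not change `|g x - h x|`. A nonzero discrepancy could thus
be doubled indefinitely while remaining at most `v`, which an Archimedean codomain excludes.
-/

/-- The function `h` restricts to a homomorphism `Γ(G, u) → Γ(H, v)` of MV-algebras. Here `Γ(G, u)`
is Mundici's MV-algebra on the interval `[0, u]` of an ordered abelian group, with
`x ⊕ y = min u (x + y)` and `¬x = u - x`; the standard MV-algebra is `Γ(ℝ, 1)`. Values of `h`
outside `[0, u]` are unconstrained. Preservation of `0` is not a field, as `0 = ¬(x ⊕ ¬x)`. -/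
structure IsMVHom {G H : Type*} [AddCommGroup G] [LinearOrder G] [AddCommGroup H] [LinearOrder H]
    (u : G) (v : H) (h : G → H) : Prop where
  mapsTo : Set.MapsTo h (Set.Icc 0 u) (Set.Icc 0 v)
  map_neg : ∀ x ∈ Set.Icc 0 u, h (u - x) = v - h x
  map_oplus : ∀ x ∈ Set.Icc 0 u, ∀ y ∈ Set.Icc 0 u, h (min u (x + y)) = min v (h x + h y)

namespace IsMVHom

protected theorem id {G : Type*} [AddCommGroup G] [LinearOrder G] (u : G) : IsMVHom u u id where
  mapsTo := Set.mapsTo_id _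
  map_neg _ _ := rfl
  map_oplus _ _ _ _ := rfl

variable {G H : Type*} [AddCommGroup G] [LinearOrder G] [AddCommGroup H] [LinearOrder H]
  {u : G} {v : H} {g h : G → H}

theorem abs_sub_map_neg (hg : IsMVHom u v g) (hh : IsMVHom u v h) {x : G}
    (hx : x ∈ Set.Icc 0 u) : |g (u - x) - h (u - x)| = |g x - h x| := by
  rw [hg.map_neg x hx, hh.map_neg x hx, sub_sub_sub_cancel_left, abs_sub_comm]

variable [IsOrderedAddMonoid G] [IsOrderedAddMonoid H]

theorem monotoneOn (hh : IsMVHom u v h) : MonotoneOn h (Set.Icc 0 u) := by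
  intro x hx y hy hxy
  have hyx : y - x ∈ Set.Icc 0 u := ⟨sub_nonneg.2 hxy, (sub_le_self y hx.1).trans hy.2⟩
  calc
    h x ≤ min v (h x + h (y - x)) :=
      le_min (hh.mapsTo hx).2 (le_add_of_nonneg_right (hh.mapsTo hyx).1)
    _ = h (min u (x + (y - x))) := (hh.map_oplus x hx _ hyx).symm
    _ = h y := by rw [add_sub_cancel, min_eq_right hy.2]

theorem map_add_of_add_le (hh : IsMVHom u v h) {x y : G} (hx : 0 ≤ x) (hy : 0 ≤ y)
    (hxy : x + y ≤ u) : h (x + y) = h x + h y := by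
  have hxI : x ∈ Set.Icc 0 u := ⟨hx, (le_add_of_nonneg_right hy).trans hxy⟩
  have hyI : y ∈ Set.Icc 0 u := ⟨hy, (le_add_of_nonneg_left hx).trans hxy⟩
  have hxy_image : h x + h y ≤ v := by
    have hnegI : u - y ∈ Set.Icc 0 u := ⟨sub_nonneg.2 hyI.2, sub_le_self u hy⟩
    have hle : h x ≤ h (u - y) := hh.monotoneOn hxI hnegI (le_sub_iff_add_le.2 hxy)
    rwa [hh.map_neg y hyI, le_sub_iff_add_le] at hle
  simpa only [min_eq_right hxy, min_eq_right hxy_image] using hh.map_oplus x hxI y hyI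

theorem map_two_nsmul (hh : IsMVHom u v h) {x : G} (hx : 0 ≤ x) (hxu : 2 • x ≤ u) :
    h (2 • x) = 2 • h x := by
  rw [two_nsmul] at hxu
  rw [two_nsmul, two_nsmul, hh.map_add_of_add_le hx hx hxu]

theorem exists_abs_sub_eq_two_nsmul (hg : IsMVHom u v g) (hh : IsMVHom u v h) {x : G}
    (hx : x ∈ Set.Icc 0 u) : ∃ y ∈ Set.Icc 0 u, |g y - h y| = 2 • |g x - h x| := by
  have of_two_nsmul_le {z : G} (hz : 0 ≤ z) (hzu : 2 • z ≤ u) :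
      ∃ y ∈ Set.Icc 0 u, |g y - h y| = 2 • |g z - h z| := by
    refine ⟨2 • z, ⟨nsmul_nonneg hz 2, hzu⟩, ?_⟩
    rw [hg.map_two_nsmul hz hzu, hh.map_two_nsmul hz hzu, ← nsmul_sub, abs_nsmul]
  rcases le_total (2 • x) u with hxu | hux
  · exact of_two_nsmul_le hx.1 hxu
  · have hneg : 2 • (u - x) ≤ u := by
      rwa [nsmul_sub, two_nsmul u, sub_le_iff_le_add, add_le_add_iff_left]
    rw [← hg.abs_sub_map_neg hh hx]
    exact of_two_nsmul_le (sub_nonneg.2 hx.2) hneg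

theorem exists_abs_sub_eq_two_pow_nsmul (hg : IsMVHom u v g) (hh : IsMVHom u v h) {x : G}
    (hx : x ∈ Set.Icc 0 u) (n : ℕ) : ∃ y ∈ Set.Icc 0 u, |g y - h y| = 2 ^ n • |g x - h x| := by
  induction n with
  | zero => exact ⟨x, hx, by rw [pow_zero, one_nsmul]⟩
  | succ n ih =>
    obtain ⟨y, hy, hyx⟩ := ih
    obtain ⟨z, hz, hzy⟩ := hg.exists_abs_sub_eq_two_nsmul hh hy
    exact ⟨z, hz, by rw [hzy, hyx, pow_succ, mul_nsmul]⟩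

theorem two_pow_nsmul_abs_sub_le (hg : IsMVHom u v g) (hh : IsMVHom u v h) {x : G}
    (hx : x ∈ Set.Icc 0 u) (n : ℕ) : 2 ^ n • |g x - h x| ≤ v := by
  obtain ⟨y, hy, hyx⟩ := hg.exists_abs_sub_eq_two_pow_nsmul hh hx n
  obtain ⟨hg0, hgv⟩ := hg.mapsTo hy
  obtain ⟨hh0, hhv⟩ := hh.mapsTo hy
  exact hyx ▸ abs_sub_le_of_nonneg_of_le hg0 hgv hh0 hhv

end IsMVHom

theorem standard_mv_algebra_rigid_general {G H : Type*}
    [AddCommGroup G] [LinearOrder G] [IsOrderedAddMonoid G]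
    [AddCommGroup H] [LinearOrder H] [IsOrderedAddMonoid H] [Archimedean H]
    {u : G} {v : H} {g h : G → H} (hg : IsMVHom u v g) (hh : IsMVHom u v h) :
    Set.EqOn g h (Set.Icc 0 u) := by
  intro x hx
  by_contra hne
  have hpos : 0 < |g x - h x| := abs_pos.2 (sub_ne_zero.2 hne)
  obtain ⟨n, hn⟩ := Archimedean.arch v hpos
  have hlt : n • |g x - h x| < 2 ^ n • |g x - h x| := nsmul_lt_nsmul_left hpos n.lt_two_pow_self
  exact (hn.trans_lt hlt).not_ge (hg.two_pow_nsmul_abs_sub_le hh hx n)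

/-- the standard MV-algebra has no nontrivial automorphisms: if
`h : [0,1] → [0,1]` is a bijection of the real unit interval satisfying
`h(1−x) = 1−h(x)` and `h(min(1, x+y)) = min(1, h(x)+h(y))` for all `x, y ∈ [0,1]`,
then `h` is the identity map. -/
theorem standard_mv_algebra_rigid (h : ℝ → ℝ)
    (hbij : Set.BijOn h (Set.Icc (0 : ℝ) 1) (Set.Icc (0 : ℝ) 1))
    (hneg : ∀ x ∈ Set.Icc (0 : ℝ) 1, h (1 - x) = 1 - h x)
    (hplus : ∀ x ∈ Set.Icc (0 : ℝ) 1, ∀ y ∈ Set.Icc (0 : ℝ) 1,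
      h (min 1 (x + y)) = min 1 (h x + h y)) :
    ∀ x ∈ Set.Icc (0 : ℝ) 1, h x = x :=
  standard_mv_algebra_rigid_general ⟨hbij.mapsTo, hneg, hplus⟩ (.id 1)
end
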